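/- (Trajectory containment, lower boundary.) Fix K ≥ 1 and real numbers l < u and l₁ ≤ u₁ with u₁ - l₁ < u - l. Set η = 1/K, t_k = k/K, and define the lower boundary b_L(t) = (1-t)·l + t·l₁, so that b_L(t_{k+1}) = b_L(t_k) + η·(l₁ - l). Suppose there exist ε_g, δ_g > 0 such that whenever b_L(t_k) ≤ z ≤ b_L(t_k) + (1 - t_k)·ε_g we have v(z, t_k) ≥ (l₁ - l) + δ_g, and suppose the perturbations satisfy |ξ_k| ≤ ξ̄ < δ_g. If additionally the step increments η·(v + ξ_k) are small enough that the trajectory cannot jump over the boundary strip in one step, then the perturbed Euler trajectory ψ̃^{k+1} = ψ̃^k + η·(v(ψ̃^k, t_k) + ξ_k) with ψ̃^0 ≥ b_L(0) = l satisfies ψ̃^k ≥ b_L(t_k) for all k = 0, …, K. -/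

import Mathlib

/-- Trajectory containment at the lower boundary of the conic region: a perturbed Euler
trajectory of an inward-pointing velocity field stays above the moving lower boundary. -/
theorem stmt_4 (K : ℕ) (hK : 1 ≤ K) (l u l₁ u₁ : ℝ) (hlu : l < u) (hl₁u₁ : l₁ ≤ u₁)
    (hnarrow : u₁ - l₁ < u - l)
    (v : ℝ → ℝ → ℝ) (ξ : ℕ → ℝ) (ψt : ℕ → ℝ)
    (η : ℝ) (hη : η = 1 / (K : ℝ)) (t : ℕ → ℝ) (ht : ∀ k, t k = (k : ℝ) / (K : ℝ))
    (bL : ℝ → ℝ) (hbL : ∀ s, bL s = (1 - s) * l + s * l₁)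
    (ε δg ξbar : ℝ) (hε : 0 < ε) (hδg : 0 < δg)
    (hboundary : ∀ k, k < K → ∀ z, bL (t k) ≤ z → z ≤ bL (t k) + (1 - t k) * ε →
      (l₁ - l) + δg ≤ v z (t k))
    (hξ : ∀ k, k < K → |ξ k| ≤ ξbar) (hξbar : ξbar < δg)
    (hstep : ∀ k, k < K → bL (t k) + (1 - t k) * ε ≤ ψt k → bL (t (k + 1)) ≤ ψt (k + 1))
    (hrec : ∀ k, k < K → ψt (k + 1) = ψt k + η * (v (ψt k) (t k) + ξ k))
    (hinit : bL 0 ≤ ψt 0) :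
    ∀ k, k ≤ K → bL (t k) ≤ ψt k := by
  have hK0 : (0 : ℝ) < K := by exact_mod_cast hK
  have hη0 : 0 < η := by rw [hη]; positivity
  intro k
  induction k with
  | zero => intro _; simpa [ht] using hinit
  | succ k ih =>
    intro hk
    have hkK : k < K := hk
    have ih' := ih hkK.le
    rcases le_total (bL (t k) + (1 - t k) * ε) (ψt k) with habove | hstrip
    · exact hstep k hkK habove
    · have hv := hboundary k hkK _ ih' hstrip
      have hξk := (abs_le.mp (hξ k hkK)).1
      have ht_succ : t (k + 1) = t k + η := by
        rw [ht, ht, hη]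
        push_cast
        ring
      have hbL_succ : bL (t (k + 1)) = bL (t k) + η * (l₁ - l) := by
        rw [hbL, hbL, ht_succ]
        ring
      have hincr : η * (l₁ - l) ≤ η * (v (ψt k) (t k) + ξ k) :=
        mul_le_mul_of_nonneg_left (by linarith) hη0.le
      rw [hrec k hkK, hbL_succ]
      exact add_le_add ih' hincr
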